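/- Let X be a finite set with a distinguished subset of labelled singletons determining π_X. The transfer matrix M = (m(π∨σ))_{π,σ∈Π_l(X,π_X)} factors as M = Z Λ Zᵀ, its restriction satisfies M₀ = Z₀ Λ₀ Z₀ᵀ, and M₀ is invertible. -/

import Mathlib

open scoped Classical

noncomputable section

/-! ## Labelled set partitions -/

/-- A labelled set partition of a finite set `α`: a set partition of `α` (encoded as the
equivalence relation `rel` whose classes are the blocks) in which each block either carries
the label `l` or not (a point `x` lies in `lab` iff the block of `x` is labelled). -/
@[ext]
structure LPart (α : Type*) where
  rel : Setoid α
  lab : Set α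
  lab_mem : ∀ ⦃x y : α⦄, rel x y → (x ∈ lab ↔ y ∈ lab)

namespace LPart

variable {α : Type*}

/-- `σ ≤ π` iff every block of `σ` (together with its label) is contained in a block of `π`. -/
instance : PartialOrder (LPart α) where
  le σ π := σ.rel ≤ π.rel ∧ σ.lab ⊆ π.lab
  le_refl σ := ⟨le_rfl, subset_rfl⟩
  le_trans _ _ _ h h' := ⟨h.1.trans h'.1, h.2.trans h'.2⟩
  le_antisymm σ π h h' := LPart.ext (le_antisymm h.1 h'.1) (le_antisymm h.2 h'.2)

/-- The join (smallest common coarsening) of two labelled set partitions: the join of the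
underlying partitions, a block being labelled iff it contains a labelled block of one of the
two partitions. -/
def sup (σ π : LPart α) : LPart α where
  rel := σ.rel ⊔ π.rel
  lab := {x | ∃ y, (σ.rel ⊔ π.rel) x y ∧ (y ∈ σ.lab ∨ y ∈ π.lab)}
  lab_mem := by
    intro x y h
    constructor
    · rintro ⟨z, hz, hl⟩
      exact ⟨z, (σ.rel ⊔ π.rel).iseqv.trans ((σ.rel ⊔ π.rel).iseqv.symm h) hz, hl⟩
    · rintro ⟨z, hz, hl⟩
      exact ⟨z, (σ.rel ⊔ π.rel).iseqv.trans h hz, hl⟩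

instance _root_.Setoid.finite [Finite α] : Finite (Setoid α) :=
  Finite.of_injective (fun s : Setoid α => ⇑s) fun _ _ h => Setoid.eq_iff_rel_eq.2 h

instance [Finite α] : Finite (LPart α) :=
  Finite.of_injective (fun π : LPart α => (π.rel, π.lab))
    (fun a b h => by
      cases a; cases b
      simpa [LPart.mk.injEq] using h)

instance fintype [Finite α] : Fintype (LPart α) := Fintype.ofFinite _

/-- `π` has exactly one labelled block. -/
def OneLab (π : LPart α) : Prop :=
  π.lab.Nonempty ∧ ∀ x ∈ π.lab, ∀ y ∈ π.lab, π.rel x y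

/-- The indicator `m(π)` that `π` has exactly one labelled block. -/
def m (π : LPart α) : ℝ := if π.OneLab then 1 else 0

/-- The labelled set partition `π_X` into singleton blocks, the singleton `{x}` being
labelled iff `x ∈ K`. -/
def piX (K : Set α) : LPart α :=
  ⟨⊥, K, fun x y h => by
    have : x = y := by
      have := Setoid.bot_def (α := α)
      exact congrFun (congrFun this x) y ▸ h
    rw [this]⟩

end LPart

/-- The Möbius function of a finite poset (the unique `μ` with `μ ⋆ ζ = δ`),
evaluated at a pair of elements. -/
def mobius {P : Type*} [Fintype P] [PartialOrder P] (x y : P) : ℝ :=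
  letI : LocallyFiniteOrder P := Fintype.toLocallyFiniteOrder
  IncidenceAlgebra.mu ℝ x y

/-- The state set `Π_l(X, π_X)`: all labelled set partitions `π ≥ π_X` having at least one
labelled block. -/
abbrev LStates (α : Type*) (K : Set α) : Type _ :=
  {π : LPart α // LPart.piX K ≤ π ∧ π.lab.Nonempty}

noncomputable instance {α : Type*} [Finite α] (K : Set α) : Fintype (LStates α K) :=
  Fintype.ofFinite _

/-- `λ(π) = ∑_{σ ∈ Π_l(X,π_X), σ ≥ π} μ_{Π_l(X)}(π, σ) m(σ)`. -/
def lamda {α : Type*} [Finite α] (K : Set α) (π : LPart α) : ℝ :=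
  letI : Fintype (LPart α) := LPart.fintype
  ∑ σ : LStates α K, if π ≤ σ.1 then mobius π σ.1 * LPart.m σ.1 else 0

/-- `Π_l(X,π_X)₀`: the states `π` with `λ(π) ≠ 0`. -/
abbrev LStates0 (α : Type*) [Finite α] (K : Set α) : Type _ :=
  {π : LStates α K // lamda K π.1 ≠ 0}

/-- Restriction of a matrix indexed by `Π_l(X,π_X)` to rows and columns in `Π_l(X,π_X)₀`. -/
def restrict0 {α : Type*} [Finite α] {K : Set α}
    (A : Matrix (LStates α K) (LStates α K) ℝ) : Matrix (LStates0 α K) (LStates0 α K) ℝ :=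
  A.submatrix Subtype.val Subtype.val

/-! Write `m = Z λ`, that is `m(ρ) = ∑_{τ ≥ ρ} λ(τ)`. As `π ∨ σ ≤ τ` means `π ≤ τ` and `σ ≤ τ`,
`m(π ∨ σ) = ∑_τ Z(π, τ) λ(τ) Z(σ, τ)`, and the states with `λ(τ) = 0` contribute nothing.
The equation `m = Z λ` is Möbius inversion on the states. It may use the Möbius function of all
labelled set partitions because the states form an upper set and the Möbius function only depends
on the interval. Finally `Z₀` is the zeta matrix of a finite poset, hence invertible. -/

open Finset IncidenceAlgebra Matrix

section ZetaMatrix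

variable {P Q R : Type*}

/-- The matrix of an element of the incidence algebra of a finite poset, as a ring homomorphism. -/
def incidenceToMatrix [Fintype P] [PartialOrder P] [LocallyFiniteOrder P] [DecidableEq P]
    [Semiring R] : IncidenceAlgebra R P →+* Matrix P P R where
  toFun f := of f
  map_zero' := rfl
  map_one' := rfl
  map_add' _ _ := rfl
  map_mul' f g := by
    ext x z
    simp only [of_apply, IncidenceAlgebra.mul_apply, Matrix.mul_apply]
    refine sum_subset (subset_univ _) fun y _ hy ↦ ?_
    rw [mem_Icc, not_and_or] at hy
    obtain hxy | hyz := hy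
    · rw [apply_eq_zero_of_not_le hxy, zero_mul]
    · rw [apply_eq_zero_of_not_le hyz, mul_zero]

variable (P R) in
/-- The zeta matrix `([x ≤ y])_{x, y}` of a poset. -/
def zetaMatrix [LE P] [DecidableLE P] [Zero R] [One R] : Matrix P P R :=
  of fun x y ↦ if x ≤ y then 1 else 0

theorem incidenceToMatrix_zeta [Fintype P] [PartialOrder P] [LocallyFiniteOrder P]
    [DecidableEq P] [DecidableLE P] [Semiring R] :
    incidenceToMatrix (zeta R) = zetaMatrix P R :=
  rfl

theorem zetaMatrix_mul_incidenceToMatrix_mu [Fintype P] [PartialOrder P] [LocallyFiniteOrder P]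
    [DecidableEq P] [DecidableLE P] [Ring R] :
    zetaMatrix P R * incidenceToMatrix (mu R) = 1 := by
  rw [← incidenceToMatrix_zeta, ← map_mul, zeta_mul_mu, map_one]

theorem isUnit_zetaMatrix [Fintype P] [PartialOrder P] [DecidableEq P] [DecidableLE P]
    [Ring R] : IsUnit (zetaMatrix P R) := by
  let _ : LocallyFiniteOrder P := Fintype.toLocallyFiniteOrder
  have h : IsUnit (zeta R : IncidenceAlgebra R P) :=
    ⟨⟨zeta R, mu R, zeta_mul_mu, mu_mul_zeta R P⟩, rfl⟩
  exact h.map incidenceToMatrix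

theorem zetaMatrix_mulVec_eq_of_eq_sum_mu [Fintype P] [PartialOrder P] [LocallyFiniteOrder P]
    [DecidableEq P] [DecidableLE P] [Ring R] {f g : P → R}
    (hg : ∀ x, g x = ∑ y, mu R x y * f y) : zetaMatrix P R *ᵥ g = f := by
  have hg' : g = incidenceToMatrix (mu R) *ᵥ f := funext hg
  rw [hg', mulVec_mulVec, zetaMatrix_mul_incidenceToMatrix_mu, one_mulVec]

theorem mu_orderEmbedding [PartialOrder P] [LocallyFiniteOrder P] [DecidableEq P]
    [PartialOrder Q] [LocallyFiniteOrder Q] [DecidableEq Q] [Ring R] (e : Q ↪o P)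
    (he : (Set.range e).OrdConnected) (x y : Q) : mu R (e x) (e y) = mu R x y := by
  let ν : IncidenceAlgebra R Q :=
    ⟨fun x y ↦ mu R (e x) (e y), fun _ _ h ↦ apply_eq_zero_of_not_le (mt e.le_iff_le.1 h) _⟩
  have map_Icc (x y : Q) : (Icc x y).map e.toEmbedding = Icc (e x) (e y) := by
    refine coe_injective ?_
    rw [coe_map, coe_Icc, coe_Icc]
    exact e.image_Icc he x y
  have hν : ν * zeta R = 1 := by
    ext x y
    calc ∑ z ∈ Icc x y, mu R (e x) (e z) * zeta R z y
        = ∑ z ∈ Icc x y, mu R (e x) (e z) :=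
          sum_congr rfl fun z hz ↦ by rw [zeta_of_le (mem_Icc.1 hz).2, mul_one]
      _ = ∑ w ∈ Icc (e x) (e y), mu R (e x) w := by
          rw [← map_Icc, sum_map]; rfl
      _ = if x = y then 1 else 0 := by simp only [sum_Icc_mu_right, e.eq_iff_eq]
  exact congrArg (fun f : IncidenceAlgebra R Q ↦ f x y) (left_inv_eq_right_inv hν zeta_mul_mu)

end ZetaMatrix

section JoinMatrix

variable {P R : Type*}

theorem zetaMatrix_mulVec_sup [SemilatticeSup P] [Fintype P] [DecidableEq P] [DecidableLE P]
    [Semiring R] (g : P → R) (x y : P) :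
    (zetaMatrix P R *ᵥ g) (x ⊔ y)
      = (zetaMatrix P R * diagonal g * (zetaMatrix P R)ᵀ) x y := by
  rw [Matrix.mul_apply]
  refine sum_congr rfl fun z _ ↦ ?_
  simp only [mul_diagonal, transpose_apply, zetaMatrix, of_apply, sup_le_iff, ite_and, ite_mul,
    mul_ite, one_mul, mul_one, zero_mul, mul_zero]
  split_ifs <;> rfl

theorem mul_diagonal_mul_eq_submatrix {m n k : Type*} [Fintype n] [DecidableEq n] [Semiring R]
    (A : Matrix m n R) (d : n → R) (B : Matrix n k R) [Fintype {i // d i ≠ 0}] :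
    let r : {i // d i ≠ 0} → n := Subtype.val
    A * diagonal d * B = A.submatrix id r * (diagonal d).submatrix r r * B.submatrix r id := by
  intro r
  ext i j
  rw [submatrix_diagonal d r Subtype.val_injective, Matrix.mul_apply, Matrix.mul_apply]
  simp only [mul_diagonal, submatrix_apply, id, Function.comp_apply]
  refine (Fintype.sum_of_injective r Subtype.val_injective _ _ (fun l hl ↦ ?_) fun _ ↦ rfl).symm
  have hd : d l = 0 := by simpa [r] using hl
  rw [hd, mul_zero, zero_mul]

/-- The Lindström–Wilf factorization of a join matrix. -/
theorem transfer_matrix_factorization_general {F : Type*} [SemilatticeSup P] [Fintype P]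
    [LocallyFiniteOrder P] [DecidableEq P] [DecidableLE P] [Field F] {f g : P → F}
    [Fintype {x // g x ≠ 0}] (hg : ∀ x, g x = ∑ y, mu F x y * f y) {M Z Λ : Matrix P P F}
    (hM : ∀ x y, M x y = f (x ⊔ y)) (hZ : ∀ x y, Z x y = if x ≤ y then 1 else 0)
    (hΛ : Λ = diagonal g) :
    let r : {x // g x ≠ 0} → P := Subtype.val
    M = Z * Λ * Zᵀ ∧ M.submatrix r r = Z.submatrix r r * Λ.submatrix r r * (Z.submatrix r r)ᵀ ∧
      IsUnit (M.submatrix r r) := by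
  intro r
  obtain rfl : Z = zetaMatrix P F := Matrix.ext hZ
  subst hΛ
  have hfac : M = zetaMatrix P F * diagonal g * (zetaMatrix P F)ᵀ := by
    ext x y
    rw [hM, ← zetaMatrix_mulVec_sup, zetaMatrix_mulVec_eq_of_eq_sum_mu hg]
  have hfac₀ : M.submatrix r r = (zetaMatrix P F).submatrix r r * (diagonal g).submatrix r r *
      ((zetaMatrix P F).submatrix r r)ᵀ := by
    rw [hfac, mul_diagonal_mul_eq_submatrix]
    rfl
  have hZ₀ : IsUnit ((zetaMatrix P F).submatrix r r) :=
    isUnit_zetaMatrix (P := {x // g x ≠ 0})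
  have hΛ₀ : IsUnit ((diagonal g).submatrix r r) := by
    rw [submatrix_diagonal _ _ Subtype.val_injective, isUnit_diagonal, Pi.isUnit_iff]
    exact fun x ↦ x.2.isUnit
  refine ⟨hfac, hfac₀, ?_⟩
  rw [hfac₀]
  exact (hZ₀.mul hΛ₀).mul ((isUnit_transpose _).2 hZ₀)

end JoinMatrix

instance LPart.semilatticeSup {α : Type*} : SemilatticeSup (LPart α) where
  sup := LPart.sup
  le_sup_left σ π := ⟨le_sup_left, fun x hx ↦ ⟨x, (σ.rel ⊔ π.rel).refl x, .inl hx⟩⟩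
  le_sup_right σ π := ⟨le_sup_right, fun x hx ↦ ⟨x, (σ.rel ⊔ π.rel).refl x, .inr hx⟩⟩
  sup_le σ π τ hσ hπ := by
    have hrel : σ.rel ⊔ π.rel ≤ τ.rel := sup_le hσ.1 hπ.1
    refine ⟨hrel, ?_⟩
    rintro x ⟨y, hxy, hy⟩
    exact (τ.lab_mem (hrel hxy)).2 (hy.elim (@hσ.2 y) (@hπ.2 y))

namespace LStates

variable {α : Type*} (K : Set α)

theorem isUpperSet : IsUpperSet {π : LPart α | LPart.piX K ≤ π ∧ π.lab.Nonempty} :=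
  fun _ _ h hπ ↦ ⟨hπ.1.trans h, hπ.2.mono h.2⟩

instance semilatticeSup : SemilatticeSup (LStates α K) :=
  Subtype.semilatticeSup fun _ _ hσ _ ↦ isUpperSet K le_sup_left hσ

instance locallyFiniteOrder [Finite α] : LocallyFiniteOrder (LStates α K) :=
  Fintype.toLocallyFiniteOrder

variable {K} [Finite α]

theorem mobius_coe (π σ : LStates α K) : mobius π.1 σ.1 = mu ℝ π σ := by
  let _ : LocallyFiniteOrder (LPart α) := Fintype.toLocallyFiniteOrder
  refine mu_orderEmbedding (R := ℝ) (OrderEmbedding.subtype _) ?_ π σ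
  have hrange : Set.range (OrderEmbedding.subtype _ : LStates α K ↪o LPart α) =
      {π | LPart.piX K ≤ π ∧ π.lab.Nonempty} := Subtype.range_val
  exact hrange ▸ (isUpperSet K).ordConnected

theorem lamda_eq_sum_mu (π : LStates α K) :
    lamda K π.1 = ∑ σ : LStates α K, mu ℝ π σ * LPart.m σ.1 := by
  refine sum_congr rfl fun σ _ ↦ ?_
  split_ifs with h
  · rw [← mobius_coe]
  · rw [apply_eq_zero_of_not_le (α := LStates α K) h, zero_mul]

end LStates

/-- The transfer matrix `M = (m(π ∨ σ))` factors as `M = Z Λ Zᵀ`, its restriction to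
`Π_l(X,π_X)₀` satisfies `M₀ = Z₀ Λ₀ Z₀ᵀ`, and `M₀` is invertible. -/
theorem transfer_matrix_factorization {α : Type*} [Fintype α] (K : Set α)
    (M Z Λ : Matrix (LStates α K) (LStates α K) ℝ)
    (hM : ∀ π σ : LStates α K, M π σ = LPart.m (π.1.sup σ.1))
    (hZ : ∀ π σ : LStates α K, Z π σ = if π.1 ≤ σ.1 then 1 else 0)
    (hΛ : Λ = Matrix.diagonal fun π : LStates α K => lamda K π.1) :
    M = Z * Λ * Z.transpose ∧
      restrict0 M = restrict0 Z * restrict0 Λ * (restrict0 Z).transpose ∧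
        IsUnit (restrict0 M) := by
  exact transfer_matrix_factorization_general (f := fun π ↦ LPart.m π.1)
    LStates.lamda_eq_sum_mu hM hZ hΛ

end
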